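/- arXiv:1012.5261 — 11 statements merged into one kernel-verified Lean document; each statement's English description precedes it below -/
import Mathlib

section
/- In R one has [W₋₁, W₁] = [W₀, W₂], i.e. [W₋₁, A*] = [A, W₂]. (Image of the O_q(ŝl₂) relation [W₋₁, W₁] = [W₀, W₂], the k = 1 case of relation (qo1)/(qo5).) -/
/-- Commutator [X,Y] = XY - YX. -/
def lieComm {R : Type*} [Ring R] (X Y : R) : R := X * Y - Y * X

/-- q-commutator [X,Y]_q = q XY - q⁻¹ YX. -/
noncomputable def qcomm {R : Type*} [Ring R] [Algebra ℂ R] (q : ℂ) (X Y : R) : R :=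
  q • (X * Y) - q⁻¹ • (Y * X)

theorem stmt_2
    {R : Type*} [Ring R] [Algebra ℂ R]
    (q ρ a₁ : ℂ) (hq : q ≠ 0) (hq8 : q ^ 8 ≠ 1) (hρ : ρ ≠ 0)
    (A As : R)
    (hDG1 : lieComm A (qcomm q⁻¹ A (qcomm q A As)) = ρ • lieComm A As)
    (hDG2 : lieComm As (qcomm q⁻¹ As (qcomm q As A)) = ρ • lieComm As A)
    (G1 Gt1 Wm1 W2 : R)
    (hG1 : G1 = qcomm q As A + a₁ • (1 : R))
    (hGt1 : Gt1 = qcomm q A As + a₁ • (1 : R))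
    (hWm1 : Wm1 = ρ⁻¹ • ((q ^ 2 + q⁻¹ ^ 2) • (A * As * A) - A ^ 2 * As - As * A ^ 2)
        + As + (ρ⁻¹ * a₁ * (q - q⁻¹)) • A)
    (hW2 : W2 = ρ⁻¹ • ((q ^ 2 + q⁻¹ ^ 2) • (As * A * As) - As ^ 2 * A - A * As ^ 2)
        + A + (ρ⁻¹ * a₁ * (q - q⁻¹)) • As)
    : lieComm Wm1 As = lieComm A W2 := by
  subst hWm1 hW2
  simp only [lieComm, mul_add, add_mul, mul_sub, sub_mul, smul_mul_assoc, mul_smul_comm, pow_two,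
    mul_assoc]
  module
end

section
/- In R the quadratic relation −W₀² + W₁² − W₋₁W₁ + W₀W₂ = (ρ(q²−q⁻²))⁻¹ [G₁, G̃₁] holds; explicitly, −A² + (A*)² − W₋₁·A* + A·W₂ = (ρ(q²−q⁻²))⁻¹ (G₁G̃₁ − G̃₁G₁). -/
theorem stmt_3
    {R : Type*} [Ring R] [Algebra ℂ R]
    (q ρ a₁ : ℂ) (hq : q ≠ 0) (hq8 : q ^ 8 ≠ 1) (hρ : ρ ≠ 0)
    (A As : R)
    (hDG1 : lieComm A (qcomm q⁻¹ A (qcomm q A As)) = ρ • lieComm A As)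
    (hDG2 : lieComm As (qcomm q⁻¹ As (qcomm q As A)) = ρ • lieComm As A)
    (G1 Gt1 Wm1 W2 : R)
    (hG1 : G1 = qcomm q As A + a₁ • (1 : R))
    (hGt1 : Gt1 = qcomm q A As + a₁ • (1 : R))
    (hWm1 : Wm1 = ρ⁻¹ • ((q ^ 2 + q⁻¹ ^ 2) • (A * As * A) - A ^ 2 * As - As * A ^ 2)
        + As + (ρ⁻¹ * a₁ * (q - q⁻¹)) • A)
    (hW2 : W2 = ρ⁻¹ • ((q ^ 2 + q⁻¹ ^ 2) • (As * A * As) - As ^ 2 * A - A * As ^ 2)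
        + A + (ρ⁻¹ * a₁ * (q - q⁻¹)) • As)
    : -A ^ 2 + As ^ 2 - Wm1 * As + A * W2 = (ρ * (q ^ 2 - q⁻¹ ^ 2))⁻¹ • (G1 * Gt1 - Gt1 * G1) := by
  have hc : q ^ 2 - q⁻¹ ^ 2 ≠ 0 := by
    intro h
    apply hq8
    have h1 : q ^ 2 * q ^ 2 = 1 := by
      have h2 : q ^ 2 = q⁻¹ ^ 2 := sub_eq_zero.mp h
      calc q ^ 2 * q ^ 2 = q ^ 2 * q⁻¹ ^ 2 := by rw [← h2]
        _ = 1 := by field_simp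
    calc q ^ 8 = (q ^ 2 * q ^ 2) ^ 2 := by ring
      _ = 1 := by rw [h1]; ring
  have hL : -A ^ 2 + As ^ 2 - Wm1 * As + A * W2
      = ρ⁻¹ • (As * A * A * As - A * As * As * A) := by
    subst hWm1 hW2
    simp only [pow_two A, pow_two As, mul_add, add_mul, mul_sub, sub_mul, smul_mul_assoc,
      mul_smul_comm, mul_assoc, smul_sub]
    abel
  have hR : G1 * Gt1 - Gt1 * G1
      = (q ^ 2 - q⁻¹ ^ 2) • (As * A * A * As - A * As * As * A) := by
    subst hG1 hGt1
    simp only [qcomm, mul_add, add_mul, mul_sub, sub_mul, smul_mul_assoc,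
      mul_smul_comm, mul_assoc, mul_one, one_mul]
    module
  rw [hL, hR, smul_smul]
  congr 1
  rw [mul_inv, mul_assoc, inv_mul_cancel₀ hc, mul_one]
end

section
/- In R one has (q+q⁻¹)[W₀, W₂] = G̃₂ − G₂, i.e. (q+q⁻¹)(A·W₂ − W₂·A) = G̃₂ − G₂. (Image of the O_q(ŝl₂) relation [W₀, W₂] = (G̃₂ − G₂)/(q+q⁻¹), the k = 1 case of relation (qo1), verifying the explicit formula for G₂ of Example 2.) -/
theorem stmt_4
    {R : Type*} [Ring R] [Algebra ℂ R]
    (q ρ a₁ : ℂ) (hq : q ≠ 0) (hq8 : q ^ 8 ≠ 1) (hρ : ρ ≠ 0)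
    (A As : R)
    (hDG1 : lieComm A (qcomm q⁻¹ A (qcomm q A As)) = ρ • lieComm A As)
    (hDG2 : lieComm As (qcomm q⁻¹ As (qcomm q As A)) = ρ • lieComm As A)
    (G1 Gt1 Wm1 W2 : R)
    (hG1 : G1 = qcomm q As A + a₁ • (1 : R))
    (hGt1 : Gt1 = qcomm q A As + a₁ • (1 : R))
    (hWm1 : Wm1 = ρ⁻¹ • ((q ^ 2 + q⁻¹ ^ 2) • (A * As * A) - A ^ 2 * As - As * A ^ 2)
        + As + (ρ⁻¹ * a₁ * (q - q⁻¹)) • A)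
    (hW2 : W2 = ρ⁻¹ • ((q ^ 2 + q⁻¹ ^ 2) • (As * A * As) - As ^ 2 * A - A * As ^ 2)
        + A + (ρ⁻¹ * a₁ * (q - q⁻¹)) • As)
    (a₂ : ℂ) (G2 Gt2 : R)
    (hG2 : G2 = (ρ * (q ^ 2 + q⁻¹ ^ 2))⁻¹ •
        ((q⁻¹ ^ 3 + q⁻¹) • (A ^ 2 * As ^ 2) - (q ^ 3 + q) • (As ^ 2 * A ^ 2)
          + (q⁻¹ ^ 3 - q ^ 3) • (A * As ^ 2 * A + As * A ^ 2 * As)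
          - (q⁻¹ ^ 5 + q⁻¹ ^ 3 + 2 * q⁻¹) • (A * As * A * As)
          + (q ^ 5 + q ^ 3 + 2 * q) • (As * A * As * A)
          + (ρ * (q - q⁻¹)) • (A ^ 2 + As ^ 2)
          + (a₁ * (q ^ 2 + q⁻¹ ^ 2) * (q - q⁻¹)) • qcomm q As A) + a₂ • (1 : R))
    (hGt2 : Gt2 = (ρ * (q ^ 2 + q⁻¹ ^ 2))⁻¹ •
        ((q⁻¹ ^ 3 + q⁻¹) • (As ^ 2 * A ^ 2) - (q ^ 3 + q) • (A ^ 2 * As ^ 2)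
          + (q⁻¹ ^ 3 - q ^ 3) • (As * A ^ 2 * As + A * As ^ 2 * A)
          - (q⁻¹ ^ 5 + q⁻¹ ^ 3 + 2 * q⁻¹) • (As * A * As * A)
          + (q ^ 5 + q ^ 3 + 2 * q) • (A * As * A * As)
          + (ρ * (q - q⁻¹)) • (As ^ 2 + A ^ 2)
          + (a₁ * (q ^ 2 + q⁻¹ ^ 2) * (q - q⁻¹)) • qcomm q A As) + a₂ • (1 : R))
    : (q + q⁻¹) • (A * W2 - W2 * A) = Gt2 - G2 := by
  have h4 : q ^ 4 + 1 ≠ 0 := by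
    intro h
    apply hq8
    linear_combination (q ^ 4 - 1) * h
  have h4' : 1 + q ^ 4 ≠ 0 := by rwa [add_comm]
  have hs : q ^ 2 + q⁻¹ ^ 2 ≠ 0 := by
    intro h
    apply h4
    field_simp at h
    linear_combination h
  subst hW2 hG2 hGt2
  simp only [qcomm, pow_two A, pow_two As, mul_add, add_mul, mul_sub, sub_mul,
    smul_mul_assoc, mul_smul_comm, mul_assoc]
  match_scalars <;> field_simp <;> ring
end

section
/- In R one has [W₀, G₂]_q = [G̃₂, W₀]_q, i.e. [A, G₂]_q = [G̃₂, A]_q. (Image of the k = 1 case of the O_q(ŝl₂) relation (qo2), whose common value is ρW₋₂ − ρW₂.) -/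
theorem stmt_5
    {R : Type*} [Ring R] [Algebra ℂ R]
    (q ρ a₁ : ℂ) (hq : q ≠ 0) (hq8 : q ^ 8 ≠ 1) (hρ : ρ ≠ 0)
    (A As : R)
    (hDG1 : lieComm A (qcomm q⁻¹ A (qcomm q A As)) = ρ • lieComm A As)
    (hDG2 : lieComm As (qcomm q⁻¹ As (qcomm q As A)) = ρ • lieComm As A)
    (G1 Gt1 Wm1 W2 : R)
    (hG1 : G1 = qcomm q As A + a₁ • (1 : R))
    (hGt1 : Gt1 = qcomm q A As + a₁ • (1 : R))
    (hWm1 : Wm1 = ρ⁻¹ • ((q ^ 2 + q⁻¹ ^ 2) • (A * As * A) - A ^ 2 * As - As * A ^ 2)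
        + As + (ρ⁻¹ * a₁ * (q - q⁻¹)) • A)
    (hW2 : W2 = ρ⁻¹ • ((q ^ 2 + q⁻¹ ^ 2) • (As * A * As) - As ^ 2 * A - A * As ^ 2)
        + A + (ρ⁻¹ * a₁ * (q - q⁻¹)) • As)
    (a₂ : ℂ) (G2 Gt2 : R)
    (hG2 : G2 = (ρ * (q ^ 2 + q⁻¹ ^ 2))⁻¹ •
        ((q⁻¹ ^ 3 + q⁻¹) • (A ^ 2 * As ^ 2) - (q ^ 3 + q) • (As ^ 2 * A ^ 2)
          + (q⁻¹ ^ 3 - q ^ 3) • (A * As ^ 2 * A + As * A ^ 2 * As)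
          - (q⁻¹ ^ 5 + q⁻¹ ^ 3 + 2 * q⁻¹) • (A * As * A * As)
          + (q ^ 5 + q ^ 3 + 2 * q) • (As * A * As * A)
          + (ρ * (q - q⁻¹)) • (A ^ 2 + As ^ 2)
          + (a₁ * (q ^ 2 + q⁻¹ ^ 2) * (q - q⁻¹)) • qcomm q As A) + a₂ • (1 : R))
    (hGt2 : Gt2 = (ρ * (q ^ 2 + q⁻¹ ^ 2))⁻¹ •
        ((q⁻¹ ^ 3 + q⁻¹) • (As ^ 2 * A ^ 2) - (q ^ 3 + q) • (A ^ 2 * As ^ 2)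
          + (q⁻¹ ^ 3 - q ^ 3) • (As * A ^ 2 * As + A * As ^ 2 * A)
          - (q⁻¹ ^ 5 + q⁻¹ ^ 3 + 2 * q⁻¹) • (As * A * As * A)
          + (q ^ 5 + q ^ 3 + 2 * q) • (A * As * A * As)
          + (ρ * (q - q⁻¹)) • (As ^ 2 + A ^ 2)
          + (a₁ * (q ^ 2 + q⁻¹ ^ 2) * (q - q⁻¹)) • qcomm q A As) + a₂ • (1 : R))
    : qcomm q A G2 = qcomm q Gt2 A := by
  have hl := congrArg (fun x => x * As) hDG1
  have hr := congrArg (fun x => As * x) hDG1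
  have hs : q ^ 2 + q⁻¹ ^ 2 ≠ 0 := by
    intro h
    apply hq8
    have h4 : q ^ 4 = -1 := by
      field_simp at h
      linear_combination h
    calc q ^ 8 = (q ^ 4) ^ 2 := by ring
      _ = 1 := by rw [h4]; norm_num
  generalize hk : (ρ * (q ^ 2 + q⁻¹ ^ 2))⁻¹ = k at hG2 hGt2
  subst hG2 hGt2
  simp only [qcomm, lieComm, mul_add, add_mul, mul_sub, sub_mul, smul_add, smul_sub,
    smul_mul_assoc, mul_smul_comm, smul_smul, mul_assoc, pow_two A, pow_two As, mul_one, one_mul,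
    inv_inv] at hl hr ⊢
  linear_combination (norm := skip) (k * (q⁻¹ ^ 2 - q ^ 2)) • hl + (k * (q⁻¹ ^ 2 - q ^ 2)) • hr
  match_scalars <;> field_simp <;> ring
end

section
/- In R one has [G₂, W₁]_q = [W₁, G̃₂]_q, i.e. [G₂, A*]_q = [A*, G̃₂]_q. (Image of the k = 1 case of the O_q(ŝl₂) relation (qo3), whose common value is ρW₃ − ρW₋₁.) -/
theorem stmt_6
    {R : Type*} [Ring R] [Algebra ℂ R]
    (q ρ a₁ : ℂ) (hq : q ≠ 0) (hq8 : q ^ 8 ≠ 1) (hρ : ρ ≠ 0)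
    (A As : R)
    (hDG1 : lieComm A (qcomm q⁻¹ A (qcomm q A As)) = ρ • lieComm A As)
    (hDG2 : lieComm As (qcomm q⁻¹ As (qcomm q As A)) = ρ • lieComm As A)
    (G1 Gt1 Wm1 W2 : R)
    (hG1 : G1 = qcomm q As A + a₁ • (1 : R))
    (hGt1 : Gt1 = qcomm q A As + a₁ • (1 : R))
    (hWm1 : Wm1 = ρ⁻¹ • ((q ^ 2 + q⁻¹ ^ 2) • (A * As * A) - A ^ 2 * As - As * A ^ 2)
        + As + (ρ⁻¹ * a₁ * (q - q⁻¹)) • A)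
    (hW2 : W2 = ρ⁻¹ • ((q ^ 2 + q⁻¹ ^ 2) • (As * A * As) - As ^ 2 * A - A * As ^ 2)
        + A + (ρ⁻¹ * a₁ * (q - q⁻¹)) • As)
    (a₂ : ℂ) (G2 Gt2 : R)
    (hG2 : G2 = (ρ * (q ^ 2 + q⁻¹ ^ 2))⁻¹ •
        ((q⁻¹ ^ 3 + q⁻¹) • (A ^ 2 * As ^ 2) - (q ^ 3 + q) • (As ^ 2 * A ^ 2)
          + (q⁻¹ ^ 3 - q ^ 3) • (A * As ^ 2 * A + As * A ^ 2 * As)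
          - (q⁻¹ ^ 5 + q⁻¹ ^ 3 + 2 * q⁻¹) • (A * As * A * As)
          + (q ^ 5 + q ^ 3 + 2 * q) • (As * A * As * A)
          + (ρ * (q - q⁻¹)) • (A ^ 2 + As ^ 2)
          + (a₁ * (q ^ 2 + q⁻¹ ^ 2) * (q - q⁻¹)) • qcomm q As A) + a₂ • (1 : R))
    (hGt2 : Gt2 = (ρ * (q ^ 2 + q⁻¹ ^ 2))⁻¹ •
        ((q⁻¹ ^ 3 + q⁻¹) • (As ^ 2 * A ^ 2) - (q ^ 3 + q) • (A ^ 2 * As ^ 2)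
          + (q⁻¹ ^ 3 - q ^ 3) • (As * A ^ 2 * As + A * As ^ 2 * A)
          - (q⁻¹ ^ 5 + q⁻¹ ^ 3 + 2 * q⁻¹) • (As * A * As * A)
          + (q ^ 5 + q ^ 3 + 2 * q) • (A * As * A * As)
          + (ρ * (q - q⁻¹)) • (As ^ 2 + A ^ 2)
          + (a₁ * (q ^ 2 + q⁻¹ ^ 2) * (q - q⁻¹)) • qcomm q A As) + a₂ • (1 : R))
    : qcomm q G2 As = qcomm q As Gt2 := by
  have key : ∀ c : ℂ, qcomm q (c •
        ((q⁻¹ ^ 3 + q⁻¹) • (A ^ 2 * As ^ 2) - (q ^ 3 + q) • (As ^ 2 * A ^ 2)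
          + (q⁻¹ ^ 3 - q ^ 3) • (A * As ^ 2 * A + As * A ^ 2 * As)
          - (q⁻¹ ^ 5 + q⁻¹ ^ 3 + 2 * q⁻¹) • (A * As * A * As)
          + (q ^ 5 + q ^ 3 + 2 * q) • (As * A * As * A)
          + (ρ * (q - q⁻¹)) • (A ^ 2 + As ^ 2)
          + (a₁ * (q ^ 2 + q⁻¹ ^ 2) * (q - q⁻¹)) • qcomm q As A) + a₂ • (1 : R)) As
      - qcomm q As (c •
        ((q⁻¹ ^ 3 + q⁻¹) • (As ^ 2 * A ^ 2) - (q ^ 3 + q) • (A ^ 2 * As ^ 2)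
          + (q⁻¹ ^ 3 - q ^ 3) • (As * A ^ 2 * As + A * As ^ 2 * A)
          - (q⁻¹ ^ 5 + q⁻¹ ^ 3 + 2 * q⁻¹) • (As * A * As * A)
          + (q ^ 5 + q ^ 3 + 2 * q) • (A * As * A * As)
          + (ρ * (q - q⁻¹)) • (As ^ 2 + A ^ 2)
          + (a₁ * (q ^ 2 + q⁻¹ ^ 2) * (q - q⁻¹)) • qcomm q A As) + a₂ • (1 : R))
      = (c * (q ^ 2 - q⁻¹ ^ 2)) •
        ((lieComm As (qcomm q⁻¹ As (qcomm q As A)) - ρ • lieComm As A) * A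
          + A * (lieComm As (qcomm q⁻¹ As (qcomm q As A)) - ρ • lieComm As A)) := by
    intro c
    simp only [lieComm, qcomm, pow_two A, pow_two As, mul_add, add_mul, mul_sub, sub_mul,
      smul_mul_assoc, mul_smul_comm, ← mul_assoc, mul_one, one_mul, inv_inv, smul_add, smul_sub]
    match_scalars <;> field_simp <;> ring
  rw [hDG2, sub_self, zero_mul, mul_zero, add_zero] at key
  rw [hG2, hGt2, ← sub_eq_zero, key, smul_zero]
end

section
/- In R one has [W₋₂, W₀] = 0 and [W₃, W₁] = 0, i.e. W₋₂ commutes with A and W₃ commutes with A*. (Image of the O_q(ŝl₂) relations [W₋₂, W₀] = 0 and [W₃, W₁] = 0 from the commuting family (qo4).) -/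
/-- Expanded form of the q-Dolan–Grady relation. -/
theorem dg_expand {R : Type*} [Ring R] [Algebra ℂ R] (q ρ : ℂ) (hq : q ≠ 0) (A B : R)
    (h : lieComm A (qcomm q⁻¹ A (qcomm q A B)) = ρ • lieComm A B) :
    A * A * A * B - (q ^ 2 + 1 + q⁻¹ ^ 2) • (A * A * B * A) + (q ^ 2 + 1 + q⁻¹ ^ 2) • (A * B * A * A)
      - B * A * A * A - ρ • (A * B - B * A) = 0 := by
  rw [← sub_eq_zero] at h
  rw [← h]
  simp only [lieComm, qcomm, mul_sub, sub_mul, mul_add, add_mul, smul_mul_assoc, mul_smul_comm,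
    mul_assoc]
  match_scalars <;> field_simp <;> ring

theorem q_sq_sum_ne {q : ℂ} (hq : q ≠ 0) (hq8 : q ^ 8 ≠ 1) : q ^ 2 + q⁻¹ ^ 2 ≠ 0 := by
  intro h
  apply hq8
  have h4 : q ^ 4 = -1 := by
    field_simp at h
    linear_combination h
  linear_combination (q ^ 4 - 1) * h4

set_option maxHeartbeats 4000000 in
theorem stmt_7
    {R : Type*} [Ring R] [Algebra ℂ R]
    (q ρ a₁ : ℂ) (hq : q ≠ 0) (hq8 : q ^ 8 ≠ 1) (hρ : ρ ≠ 0)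
    (A As : R)
    (hDG1 : lieComm A (qcomm q⁻¹ A (qcomm q A As)) = ρ • lieComm A As)
    (hDG2 : lieComm As (qcomm q⁻¹ As (qcomm q As A)) = ρ • lieComm As A)
    (G1 Gt1 Wm1 W2 : R)
    (hG1 : G1 = qcomm q As A + a₁ • (1 : R))
    (hGt1 : Gt1 = qcomm q A As + a₁ • (1 : R))
    (hWm1 : Wm1 = ρ⁻¹ • ((q ^ 2 + q⁻¹ ^ 2) • (A * As * A) - A ^ 2 * As - As * A ^ 2)
        + As + (ρ⁻¹ * a₁ * (q - q⁻¹)) • A)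
    (hW2 : W2 = ρ⁻¹ • ((q ^ 2 + q⁻¹ ^ 2) • (As * A * As) - As ^ 2 * A - A * As ^ 2)
        + A + (ρ⁻¹ * a₁ * (q - q⁻¹)) • As)
    (a₂ : ℂ) (G2 Gt2 : R)
    (hG2 : G2 = (ρ * (q ^ 2 + q⁻¹ ^ 2))⁻¹ •
        ((q⁻¹ ^ 3 + q⁻¹) • (A ^ 2 * As ^ 2) - (q ^ 3 + q) • (As ^ 2 * A ^ 2)
          + (q⁻¹ ^ 3 - q ^ 3) • (A * As ^ 2 * A + As * A ^ 2 * As)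
          - (q⁻¹ ^ 5 + q⁻¹ ^ 3 + 2 * q⁻¹) • (A * As * A * As)
          + (q ^ 5 + q ^ 3 + 2 * q) • (As * A * As * A)
          + (ρ * (q - q⁻¹)) • (A ^ 2 + As ^ 2)
          + (a₁ * (q ^ 2 + q⁻¹ ^ 2) * (q - q⁻¹)) • qcomm q As A) + a₂ • (1 : R))
    (hGt2 : Gt2 = (ρ * (q ^ 2 + q⁻¹ ^ 2))⁻¹ •
        ((q⁻¹ ^ 3 + q⁻¹) • (As ^ 2 * A ^ 2) - (q ^ 3 + q) • (A ^ 2 * As ^ 2)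
          + (q⁻¹ ^ 3 - q ^ 3) • (As * A ^ 2 * As + A * As ^ 2 * A)
          - (q⁻¹ ^ 5 + q⁻¹ ^ 3 + 2 * q⁻¹) • (As * A * As * A)
          + (q ^ 5 + q ^ 3 + 2 * q) • (A * As * A * As)
          + (ρ * (q - q⁻¹)) • (As ^ 2 + A ^ 2)
          + (a₁ * (q ^ 2 + q⁻¹ ^ 2) * (q - q⁻¹)) • qcomm q A As) + a₂ • (1 : R))
    (Wm2 W3 : R)
    (hWm2 : Wm2 = W2 + ρ⁻¹ • qcomm q A G2)
    (hW3 : W3 = Wm1 + ρ⁻¹ • qcomm q G2 As)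
    : lieComm Wm2 A = 0 ∧ lieComm W3 As = 0 := by
  have P1 := dg_expand q ρ hq A As hDG1
  have P2 := dg_expand q ρ hq As A hDG2
  have hS := q_sq_sum_ne hq hq8
  have hK : ρ * ρ * (q ^ 2 + q⁻¹ ^ 2) ≠ 0 := mul_ne_zero (mul_ne_zero hρ hρ) hS
  clear hG1 hGt1 hGt2 hDG1 hDG2
  set r := q⁻¹ with hr
  have hqr : q * r = 1 := mul_inv_cancel₀ hq
  set S := q ^ 2 + r ^ 2 with hSd
  have hN : (ρ * S) • G2 = ((r ^ 3 + r) • (A ^ 2 * As ^ 2) - (q ^ 3 + q) • (As ^ 2 * A ^ 2)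
          + (r ^ 3 - q ^ 3) • (A * As ^ 2 * A + As * A ^ 2 * As)
          - (r ^ 5 + r ^ 3 + 2 * r) • (A * As * A * As)
          + (q ^ 5 + q ^ 3 + 2 * q) • (As * A * As * A)
          + (ρ * (q - r)) • (A ^ 2 + As ^ 2)
          + (a₁ * S * (q - r)) • qcomm q As A) + (ρ * S * a₂) • (1 : R) := by
    rw [hG2, smul_add, smul_smul, smul_smul, mul_inv_cancel₀ (mul_ne_zero hρ hS), one_smul]
  have hW2' : ρ • W2 = (S • (As * A * As) - As ^ 2 * A - A * As ^ 2)
        + ρ • A + (a₁ * (q - r)) • As := by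
    rw [hW2, smul_add, smul_add, smul_smul, smul_smul, mul_inv_cancel₀ hρ, one_smul]
    congr 2
    field_simp
  have hWm1' : ρ • Wm1 = (S • (A * As * A) - A ^ 2 * As - As * A ^ 2)
        + ρ • As + (a₁ * (q - r)) • A := by
    rw [hWm1, smul_add, smul_add, smul_smul, smul_smul, mul_inv_cancel₀ hρ, one_smul]
    congr 2
    field_simp
  have hWm2' : (ρ * ρ * S) • Wm2 = (ρ * S) • (ρ • W2) + qcomm q A ((ρ * S) • G2) := by
    rw [hWm2]
    simp only [qcomm, mul_smul_comm, smul_mul_assoc]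
    match_scalars <;> field_simp
  have hW3' : (ρ * ρ * S) • W3 = (ρ * S) • (ρ • Wm1) + qcomm q ((ρ * S) • G2) As := by
    rw [hW3]
    simp only [qcomm, mul_smul_comm, smul_mul_assoc]
    match_scalars <;> field_simp
  rw [hN, hW2'] at hWm2'
  rw [hN, hWm1'] at hW3'
  clear hG2 hW2 hWm1 hWm2 hW3 hN hW2' hWm1'
  constructor
  · have key : (ρ * ρ * S) • lieComm Wm2 A = lieComm ((ρ * ρ * S) • Wm2) A := by
      simp only [lieComm, mul_smul_comm, smul_mul_assoc, smul_sub]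
    rw [hWm2'] at key
    refine (smul_eq_zero_iff_right hK).mp ?_
    rw [key]
    set P := A * A * A * As - (q ^ 2 + 1 + r ^ 2) • (A * A * As * A)
      + (q ^ 2 + 1 + r ^ 2) • (A * As * A * A) - As * A * A * A - ρ • (A * As - As * A) with hP
    have z : -(r ^ 2 + 1) • (A * P * As) - S • (P * (A * As))
        + (r ^ 2 + 1 + q ^ 4 + r ^ 4) • (P * (As * A))
        + (1 + r ^ 4 + q ^ 4 + q ^ 2) • (A * As * P) - S • (As * A * P)
        - (1 + q ^ 2) • (As * P * A) + (a₁ * S * (q - r)) • P = 0 := by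
      simp [P1]
    rw [← z, hP]
    simp only [lieComm, qcomm, pow_two A, pow_two As, mul_sub, sub_mul, mul_add, add_mul,
      smul_mul_assoc, mul_smul_comm, mul_assoc, mul_one, one_mul, hSd, hr]
    clear * - hq
    match_scalars <;> field_simp <;> ring
  · have key : (ρ * ρ * S) • lieComm W3 As = lieComm ((ρ * ρ * S) • W3) As := by
      simp only [lieComm, mul_smul_comm, smul_mul_assoc, smul_sub]
    rw [hW3'] at key
    refine (smul_eq_zero_iff_right hK).mp ?_
    rw [key]
    set P := As * As * As * A - (q ^ 2 + 1 + r ^ 2) • (As * As * A * As)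
      + (q ^ 2 + 1 + r ^ 2) • (As * A * As * As) - A * As * As * As - ρ • (As * A - A * As) with hP
    have z : (q ^ 4 + q ^ 2 + 1 + r ^ 4) • (P * (A * As)) - (1 + r ^ 2) • (A * P * As)
        - S • (P * (As * A)) - S • (A * As * P)
        + (q ^ 4 + 1 + r ^ 2 + r ^ 4) • (As * A * P)
        - (1 + q ^ 2) • (As * P * A) + (a₁ * S * (q - r)) • P = 0 := by
      simp [P2]
    rw [← z, hP]
    simp only [lieComm, qcomm, pow_two A, pow_two As, mul_sub, sub_mul, mul_add, add_mul,
      smul_mul_assoc, mul_smul_comm, mul_assoc, mul_one, one_mul, hSd, hr]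
    clear * - hq
    match_scalars <;> field_simp <;> ring
end

section
/- In R one has [W₀, G₂] + [G₁, W₋₁] = 0, i.e. [A, G₂] + [G₁, W₋₁] = 0. (Image of the O_q(ŝl₂) relation (qo6) with k = 0, l = 1.) -/
theorem stmt_10
    {R : Type*} [Ring R] [Algebra ℂ R]
    (q ρ a₁ : ℂ) (hq : q ≠ 0) (hq8 : q ^ 8 ≠ 1) (hρ : ρ ≠ 0)
    (A As : R)
    (hDG1 : lieComm A (qcomm q⁻¹ A (qcomm q A As)) = ρ • lieComm A As)
    (hDG2 : lieComm As (qcomm q⁻¹ As (qcomm q As A)) = ρ • lieComm As A)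
    (G1 Gt1 Wm1 W2 : R)
    (hG1 : G1 = qcomm q As A + a₁ • (1 : R))
    (hGt1 : Gt1 = qcomm q A As + a₁ • (1 : R))
    (hWm1 : Wm1 = ρ⁻¹ • ((q ^ 2 + q⁻¹ ^ 2) • (A * As * A) - A ^ 2 * As - As * A ^ 2)
        + As + (ρ⁻¹ * a₁ * (q - q⁻¹)) • A)
    (hW2 : W2 = ρ⁻¹ • ((q ^ 2 + q⁻¹ ^ 2) • (As * A * As) - As ^ 2 * A - A * As ^ 2)
        + A + (ρ⁻¹ * a₁ * (q - q⁻¹)) • As)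
    (a₂ : ℂ) (G2 Gt2 : R)
    (hG2 : G2 = (ρ * (q ^ 2 + q⁻¹ ^ 2))⁻¹ •
        ((q⁻¹ ^ 3 + q⁻¹) • (A ^ 2 * As ^ 2) - (q ^ 3 + q) • (As ^ 2 * A ^ 2)
          + (q⁻¹ ^ 3 - q ^ 3) • (A * As ^ 2 * A + As * A ^ 2 * As)
          - (q⁻¹ ^ 5 + q⁻¹ ^ 3 + 2 * q⁻¹) • (A * As * A * As)
          + (q ^ 5 + q ^ 3 + 2 * q) • (As * A * As * A)
          + (ρ * (q - q⁻¹)) • (A ^ 2 + As ^ 2)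
          + (a₁ * (q ^ 2 + q⁻¹ ^ 2) * (q - q⁻¹)) • qcomm q As A) + a₂ • (1 : R))
    (hGt2 : Gt2 = (ρ * (q ^ 2 + q⁻¹ ^ 2))⁻¹ •
        ((q⁻¹ ^ 3 + q⁻¹) • (As ^ 2 * A ^ 2) - (q ^ 3 + q) • (A ^ 2 * As ^ 2)
          + (q⁻¹ ^ 3 - q ^ 3) • (As * A ^ 2 * As + A * As ^ 2 * A)
          - (q⁻¹ ^ 5 + q⁻¹ ^ 3 + 2 * q⁻¹) • (As * A * As * A)
          + (q ^ 5 + q ^ 3 + 2 * q) • (A * As * A * As)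
          + (ρ * (q - q⁻¹)) • (As ^ 2 + A ^ 2)
          + (a₁ * (q ^ 2 + q⁻¹ ^ 2) * (q - q⁻¹)) • qcomm q A As) + a₂ • (1 : R))
    : lieComm A G2 + lieComm G1 Wm1 = 0 := by
  have h4 : q ^ 4 + 1 ≠ 0 := by
    intro h
    apply hq8
    linear_combination (q ^ 4 - 1) * h
  have hs : q ^ 2 + q⁻¹ ^ 2 ≠ 0 := by
    intro h
    apply h4
    have : q ^ 4 + 1 = q ^ 2 * (q ^ 2 + q⁻¹ ^ 2) := by field_simp
    rw [this, h, mul_zero]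
  have hD := sub_eq_zero.mpr hDG1
  have key : (ρ * (q ^ 2 + q⁻¹ ^ 2)) • (lieComm A G2 + lieComm G1 Wm1)
      = (q⁻¹ ^ 3 + q⁻¹) •
          ((lieComm A (qcomm q⁻¹ A (qcomm q A As)) - ρ • lieComm A As) * As)
        - (q ^ 3 + q) •
          (As * (lieComm A (qcomm q⁻¹ A (qcomm q A As)) - ρ • lieComm A As)) := by
    subst hG2 hWm1 hG1
    clear hD hDG1 hDG2 hGt1 hW2 hGt2
    simp only [lieComm, qcomm, pow_two A, pow_two As, mul_add, add_mul, mul_sub, sub_mul,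
      smul_mul_assoc, mul_smul_comm, mul_one, one_mul, mul_assoc, inv_inv]
    match_scalars <;> field_simp <;> ring
  rw [hD, zero_mul, mul_zero, smul_zero, smul_zero, sub_zero] at key
  exact (smul_eq_zero_iff_right (mul_ne_zero hρ hs)).mp key
end

section
/- In R one has [W₀, G̃₂] + [G̃₁, W₋₁] = 0, i.e. [A, G̃₂] + [G̃₁, W₋₁] = 0. (Image of the O_q(ŝl₂) relation (qo7) with k = 0, l = 1.) -/
theorem stmt_11
    {R : Type*} [Ring R] [Algebra ℂ R]
    (q ρ a₁ : ℂ) (hq : q ≠ 0) (hq8 : q ^ 8 ≠ 1) (hρ : ρ ≠ 0)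
    (A As : R)
    (hDG1 : lieComm A (qcomm q⁻¹ A (qcomm q A As)) = ρ • lieComm A As)
    (hDG2 : lieComm As (qcomm q⁻¹ As (qcomm q As A)) = ρ • lieComm As A)
    (G1 Gt1 Wm1 W2 : R)
    (hG1 : G1 = qcomm q As A + a₁ • (1 : R))
    (hGt1 : Gt1 = qcomm q A As + a₁ • (1 : R))
    (hWm1 : Wm1 = ρ⁻¹ • ((q ^ 2 + q⁻¹ ^ 2) • (A * As * A) - A ^ 2 * As - As * A ^ 2)
        + As + (ρ⁻¹ * a₁ * (q - q⁻¹)) • A)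
    (hW2 : W2 = ρ⁻¹ • ((q ^ 2 + q⁻¹ ^ 2) • (As * A * As) - As ^ 2 * A - A * As ^ 2)
        + A + (ρ⁻¹ * a₁ * (q - q⁻¹)) • As)
    (a₂ : ℂ) (G2 Gt2 : R)
    (hG2 : G2 = (ρ * (q ^ 2 + q⁻¹ ^ 2))⁻¹ •
        ((q⁻¹ ^ 3 + q⁻¹) • (A ^ 2 * As ^ 2) - (q ^ 3 + q) • (As ^ 2 * A ^ 2)
          + (q⁻¹ ^ 3 - q ^ 3) • (A * As ^ 2 * A + As * A ^ 2 * As)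
          - (q⁻¹ ^ 5 + q⁻¹ ^ 3 + 2 * q⁻¹) • (A * As * A * As)
          + (q ^ 5 + q ^ 3 + 2 * q) • (As * A * As * A)
          + (ρ * (q - q⁻¹)) • (A ^ 2 + As ^ 2)
          + (a₁ * (q ^ 2 + q⁻¹ ^ 2) * (q - q⁻¹)) • qcomm q As A) + a₂ • (1 : R))
    (hGt2 : Gt2 = (ρ * (q ^ 2 + q⁻¹ ^ 2))⁻¹ •
        ((q⁻¹ ^ 3 + q⁻¹) • (As ^ 2 * A ^ 2) - (q ^ 3 + q) • (A ^ 2 * As ^ 2)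
          + (q⁻¹ ^ 3 - q ^ 3) • (As * A ^ 2 * As + A * As ^ 2 * A)
          - (q⁻¹ ^ 5 + q⁻¹ ^ 3 + 2 * q⁻¹) • (As * A * As * A)
          + (q ^ 5 + q ^ 3 + 2 * q) • (A * As * A * As)
          + (ρ * (q - q⁻¹)) • (As ^ 2 + A ^ 2)
          + (a₁ * (q ^ 2 + q⁻¹ ^ 2) * (q - q⁻¹)) • qcomm q A As) + a₂ • (1 : R))
    : lieComm A Gt2 + lieComm Gt1 Wm1 = 0 := by
  have h4 : q ^ 4 + 1 ≠ 0 := by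
    intro h
    apply hq8
    linear_combination (q ^ 4 - 1) * h
  have hs : q ^ 2 + q⁻¹ ^ 2 ≠ 0 := by
    intro h
    apply h4
    have : q ^ 4 + 1 = q ^ 2 * (q ^ 2 + q⁻¹ ^ 2) := by field_simp
    rw [this, h, mul_zero]
  have e1 := congrArg (fun X => X * As) hDG1
  have e2 := congrArg (fun X => As * X) hDG1
  subst hGt1 hWm1 hGt2
  clear hDG1 hDG2 hG1 hW2 hG2
  simp only [lieComm, qcomm, pow_two A, pow_two As, mul_add, add_mul, mul_sub, sub_mul,
    smul_mul_assoc, mul_smul_comm, smul_add, smul_sub, smul_smul, mul_assoc, mul_one, one_mul,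
    inv_inv] at e1 e2 ⊢
  rw [← sub_eq_zero] at e1 e2
  have key := congrArg₂ (fun X Y => (-(q ^ 3 + q) * (ρ * (q ^ 2 + q⁻¹ ^ 2))⁻¹) • X
    + ((q⁻¹ ^ 3 + q⁻¹) * (ρ * (q ^ 2 + q⁻¹ ^ 2))⁻¹) • Y) e1 e2
  simp only [smul_zero, add_zero] at key
  refine Eq.trans ?_ key
  have h4' : 1 + q ^ 4 ≠ 0 := by rwa [add_comm]
  have h5 : q ^ 2 * q ^ 2 + 1 ≠ 0 := by
    intro h
    apply h4
    linear_combination h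
  match_scalars <;> field_simp <;> ring
end

section
/- In R one has [W₁, G₂] + [G₁, W₂] = 0, i.e. [A*, G₂] + [G₁, W₂] = 0. (Image of the O_q(ŝl₂) relation (qo8) with k = 0, l = 1.) -/
theorem stmt_12
    {R : Type*} [Ring R] [Algebra ℂ R]
    (q ρ a₁ : ℂ) (hq : q ≠ 0) (hq8 : q ^ 8 ≠ 1) (hρ : ρ ≠ 0)
    (A As : R)
    (hDG1 : lieComm A (qcomm q⁻¹ A (qcomm q A As)) = ρ • lieComm A As)
    (hDG2 : lieComm As (qcomm q⁻¹ As (qcomm q As A)) = ρ • lieComm As A)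
    (G1 Gt1 Wm1 W2 : R)
    (hG1 : G1 = qcomm q As A + a₁ • (1 : R))
    (hGt1 : Gt1 = qcomm q A As + a₁ • (1 : R))
    (hWm1 : Wm1 = ρ⁻¹ • ((q ^ 2 + q⁻¹ ^ 2) • (A * As * A) - A ^ 2 * As - As * A ^ 2)
        + As + (ρ⁻¹ * a₁ * (q - q⁻¹)) • A)
    (hW2 : W2 = ρ⁻¹ • ((q ^ 2 + q⁻¹ ^ 2) • (As * A * As) - As ^ 2 * A - A * As ^ 2)
        + A + (ρ⁻¹ * a₁ * (q - q⁻¹)) • As)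
    (a₂ : ℂ) (G2 Gt2 : R)
    (hG2 : G2 = (ρ * (q ^ 2 + q⁻¹ ^ 2))⁻¹ •
        ((q⁻¹ ^ 3 + q⁻¹) • (A ^ 2 * As ^ 2) - (q ^ 3 + q) • (As ^ 2 * A ^ 2)
          + (q⁻¹ ^ 3 - q ^ 3) • (A * As ^ 2 * A + As * A ^ 2 * As)
          - (q⁻¹ ^ 5 + q⁻¹ ^ 3 + 2 * q⁻¹) • (A * As * A * As)
          + (q ^ 5 + q ^ 3 + 2 * q) • (As * A * As * A)
          + (ρ * (q - q⁻¹)) • (A ^ 2 + As ^ 2)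
          + (a₁ * (q ^ 2 + q⁻¹ ^ 2) * (q - q⁻¹)) • qcomm q As A) + a₂ • (1 : R))
    (hGt2 : Gt2 = (ρ * (q ^ 2 + q⁻¹ ^ 2))⁻¹ •
        ((q⁻¹ ^ 3 + q⁻¹) • (As ^ 2 * A ^ 2) - (q ^ 3 + q) • (A ^ 2 * As ^ 2)
          + (q⁻¹ ^ 3 - q ^ 3) • (As * A ^ 2 * As + A * As ^ 2 * A)
          - (q⁻¹ ^ 5 + q⁻¹ ^ 3 + 2 * q⁻¹) • (As * A * As * A)
          + (q ^ 5 + q ^ 3 + 2 * q) • (A * As * A * As)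
          + (ρ * (q - q⁻¹)) • (As ^ 2 + A ^ 2)
          + (a₁ * (q ^ 2 + q⁻¹ ^ 2) * (q - q⁻¹)) • qcomm q A As) + a₂ • (1 : R))
    : lieComm As G2 + lieComm G1 W2 = 0 := by
  have hs : q ^ 2 + q⁻¹ ^ 2 ≠ 0 := by
    intro h
    apply hq8
    have h4 : q ^ 4 + 1 = 0 := by
      have : q ^ 4 + 1 = q ^ 2 * (q ^ 2 + q⁻¹ ^ 2) := by field_simp
      rw [this, h, mul_zero]
    linear_combination (q ^ 4 - 1) * h4
  have hE := sub_eq_zero.mpr hDG2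
  have hL := congrArg (fun x => A * x) hE
  have hR := congrArg (fun x => x * A) hE
  have key : lieComm As G2 + lieComm G1 W2 =
      ((ρ * (q ^ 2 + q⁻¹ ^ 2))⁻¹ * (q⁻¹ ^ 3 + q⁻¹)) •
        (A * (lieComm As (qcomm q⁻¹ As (qcomm q As A)) - ρ • lieComm As A))
      - ((ρ * (q ^ 2 + q⁻¹ ^ 2))⁻¹ * (q ^ 3 + q)) •
        ((lieComm As (qcomm q⁻¹ As (qcomm q As A)) - ρ • lieComm As A) * A) := by
    have hs' : q ^ 4 + 1 ≠ 0 := by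
      intro h
      apply hs
      field_simp
      linear_combination h
    subst hG2 hG1 hW2
    clear hGt1 hWm1 hGt2 hL hR hE hDG1 hDG2 hq8
    simp only [lieComm, qcomm, pow_two As, pow_two A, mul_add, add_mul, mul_sub, sub_mul,
      smul_mul_assoc, mul_smul_comm, mul_assoc, mul_one, one_mul, inv_inv]
    match_scalars <;> field_simp <;> ring
  rw [key, hE]
  simp
end

section
/- In R one has [W₁, G̃₂] + [G̃₁, W₂] = 0, i.e. [A*, G̃₂] + [G̃₁, W₂] = 0. (Image of the O_q(ŝl₂) relation (qo9) with k = 0, l = 1.) -/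
theorem stmt_13
    {R : Type*} [Ring R] [Algebra ℂ R]
    (q ρ a₁ : ℂ) (hq : q ≠ 0) (hq8 : q ^ 8 ≠ 1) (hρ : ρ ≠ 0)
    (A As : R)
    (hDG1 : lieComm A (qcomm q⁻¹ A (qcomm q A As)) = ρ • lieComm A As)
    (hDG2 : lieComm As (qcomm q⁻¹ As (qcomm q As A)) = ρ • lieComm As A)
    (G1 Gt1 Wm1 W2 : R)
    (hG1 : G1 = qcomm q As A + a₁ • (1 : R))
    (hGt1 : Gt1 = qcomm q A As + a₁ • (1 : R))
    (hWm1 : Wm1 = ρ⁻¹ • ((q ^ 2 + q⁻¹ ^ 2) • (A * As * A) - A ^ 2 * As - As * A ^ 2)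
        + As + (ρ⁻¹ * a₁ * (q - q⁻¹)) • A)
    (hW2 : W2 = ρ⁻¹ • ((q ^ 2 + q⁻¹ ^ 2) • (As * A * As) - As ^ 2 * A - A * As ^ 2)
        + A + (ρ⁻¹ * a₁ * (q - q⁻¹)) • As)
    (a₂ : ℂ) (G2 Gt2 : R)
    (hG2 : G2 = (ρ * (q ^ 2 + q⁻¹ ^ 2))⁻¹ •
        ((q⁻¹ ^ 3 + q⁻¹) • (A ^ 2 * As ^ 2) - (q ^ 3 + q) • (As ^ 2 * A ^ 2)
          + (q⁻¹ ^ 3 - q ^ 3) • (A * As ^ 2 * A + As * A ^ 2 * As)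
          - (q⁻¹ ^ 5 + q⁻¹ ^ 3 + 2 * q⁻¹) • (A * As * A * As)
          + (q ^ 5 + q ^ 3 + 2 * q) • (As * A * As * A)
          + (ρ * (q - q⁻¹)) • (A ^ 2 + As ^ 2)
          + (a₁ * (q ^ 2 + q⁻¹ ^ 2) * (q - q⁻¹)) • qcomm q As A) + a₂ • (1 : R))
    (hGt2 : Gt2 = (ρ * (q ^ 2 + q⁻¹ ^ 2))⁻¹ •
        ((q⁻¹ ^ 3 + q⁻¹) • (As ^ 2 * A ^ 2) - (q ^ 3 + q) • (A ^ 2 * As ^ 2)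
          + (q⁻¹ ^ 3 - q ^ 3) • (As * A ^ 2 * As + A * As ^ 2 * A)
          - (q⁻¹ ^ 5 + q⁻¹ ^ 3 + 2 * q⁻¹) • (As * A * As * A)
          + (q ^ 5 + q ^ 3 + 2 * q) • (A * As * A * As)
          + (ρ * (q - q⁻¹)) • (As ^ 2 + A ^ 2)
          + (a₁ * (q ^ 2 + q⁻¹ ^ 2) * (q - q⁻¹)) • qcomm q A As) + a₂ • (1 : R))
    : lieComm As Gt2 + lieComm Gt1 W2 = 0 := by
  have hq4 : q ^ 4 + 1 ≠ 0 := by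
    intro h
    exact hq8 (by linear_combination (q ^ 4 - 1) * h)
  have hs : q ^ 2 + q⁻¹ ^ 2 ≠ 0 := by
    intro h
    apply hq4
    field_simp at h
    linear_combination h
  have hE : lieComm As (qcomm q⁻¹ As (qcomm q As A)) - ρ • lieComm As A = 0 :=
    sub_eq_zero.mpr hDG2
  have hL : ((ρ * (q ^ 2 + q⁻¹ ^ 2))⁻¹ * (q⁻¹ ^ 3 + q⁻¹)) •
        ((lieComm As (qcomm q⁻¹ As (qcomm q As A)) - ρ • lieComm As A) * A)
      - ((ρ * (q ^ 2 + q⁻¹ ^ 2))⁻¹ * (q ^ 3 + q)) •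
        (A * (lieComm As (qcomm q⁻¹ As (qcomm q As A)) - ρ • lieComm As A)) = 0 := by
    rw [hE]; simp
  rw [← hL, hGt2, hGt1, hW2]
  clear hL hE hDG1 hDG2 hG1 hGt1 hWm1 hW2 hG2 hGt2
  have hinv : (ρ * (q ^ 2 + q⁻¹ ^ 2))⁻¹ = ρ⁻¹ * (q ^ 2 * (q ^ 4 + 1)⁻¹) := by
    field_simp
  rw [hinv]
  simp only [lieComm, qcomm, mul_add, add_mul, mul_sub, sub_mul, smul_mul_assoc,
    mul_smul_comm, mul_one, one_mul, pow_two A, pow_two As, mul_assoc, inv_inv]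
  match_scalars <;> field_simp <;> ring
end

section
/- (Classical Dolan–Grady hierarchy, first level; the q = 1 specialization.) For all scalars κ, κ* ∈ ℂ, the elements κA + κ*A* and κB + κ*B* of R commute: [κA + κ*A*, κB + κ*B*] = 0. -/
theorem stmt_19
    {R : Type*} [Ring R] [Algebra ℂ R]
    (ρ : ℂ) (hρ : ρ ≠ 0)
    (A As : R)
    (hDG1 : lieComm A (lieComm A (lieComm A As)) = ρ • lieComm A As)
    (hDG2 : lieComm As (lieComm As (lieComm As A)) = ρ • lieComm As A)
    (B Bs : R)
    (hB : B = ρ⁻¹ • ((2 : ℂ) • (A * As * A) - A ^ 2 * As - As * A ^ 2) + As)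
    (hBs : Bs = ρ⁻¹ • ((2 : ℂ) • (As * A * As) - As ^ 2 * A - A * As ^ 2) + A)
    : ∀ κ κs : ℂ, lieComm (κ • A + κs • As) (κ • B + κs • Bs) = 0 := by
  have eB : B = As - ρ⁻¹ • lieComm A (lieComm A As) := by
    rw [hB, two_smul, sub_eq_add_neg As, ← smul_neg, add_comm]
    congr 2
    unfold lieComm
    noncomm_ring
  have eBs : Bs = A - ρ⁻¹ • lieComm As (lieComm As A) := by
    rw [hBs, two_smul, sub_eq_add_neg A, ← smul_neg, add_comm]
    congr 2
    unfold lieComm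
    noncomm_ring
  have sub_r : ∀ (X Y Z : R), lieComm X (Y - ρ⁻¹ • Z) = lieComm X Y - ρ⁻¹ • lieComm X Z := by
    intro X Y Z
    simp only [lieComm, mul_sub, sub_mul, mul_smul_comm, smul_mul_assoc, smul_sub]
    abel
  have h1 : lieComm A B = 0 := by
    rw [eB, sub_r, hDG1, smul_smul, inv_mul_cancel₀ hρ, one_smul, sub_self]
  have h2 : lieComm As Bs = 0 := by
    rw [eBs, sub_r, hDG2, smul_smul, inv_mul_cancel₀ hρ, one_smul, sub_self]
  have h3 : lieComm A Bs + lieComm As B = 0 := by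
    have hc : lieComm A (lieComm As (lieComm As A)) = - lieComm As (lieComm A (lieComm A As)) := by
      unfold lieComm
      noncomm_ring
    rw [eB, eBs, sub_r, sub_r, hc, smul_neg]
    unfold lieComm
    abel
  intro κ κs
  have key : lieComm (κ • A + κs • As) (κ • B + κs • Bs)
      = (κ * κ) • lieComm A B + (κ * κs) • (lieComm A Bs + lieComm As B)
        + (κs * κs) • lieComm As Bs := by
    simp only [lieComm, mul_add, add_mul, mul_smul_comm, smul_mul_assoc, smul_sub, smul_add,
      smul_smul, mul_comm κs κ]
    abel
  rw [key, h1, h2, h3]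
  simp
end
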